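/- arXiv:2302.04695 — 2 statements merged into one kernel-verified Lean document; each statement's English description precedes it below -/
import Mathlib

section
/- Let K_{n_1,...,n_k} be a complete k-partite graph. If there exist indices i and j with n_i - n_j ≥ 2, then moving one vertex from part i to part j strictly increases the spectral radius: λ(K_{n_1,...,n_i - 1,...,n_j + 1,...,n_k}) > λ(K_{n_1,...,n_i,...,n_j,...,n_k}). -/
open Finset

noncomputable def adjMat {V : Type*} [Fintype V] [DecidableEq V] (G : SimpleGraph V) :
    Matrix V V ℝ :=
  letI := Classical.decRel G.Adj
  G.adjMatrix ℝ

/-- The spectral radius (largest adjacency eigenvalue) of a finite graph. -/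
noncomputable def specRad {V : Type*} [Fintype V] [DecidableEq V] (G : SimpleGraph V) : ℝ :=
  sSup (spectrum ℝ (adjMat G))

/-- `G` contains no matching with `m` edges. -/
def MFree {V : Type*} (G : SimpleGraph V) (m : ℕ) : Prop :=
  ¬ ∃ M : SimpleGraph.Subgraph G, M.IsMatching ∧ M.edgeSet.ncard = m

lemma adjMat_mulVec_cmg {k : ℕ} (m : Fin k → ℕ) (v : (Σ t, Fin (m t)) → ℝ) (x : Σ t, Fin (m t)) :
    (adjMat (SimpleGraph.completeMultipartiteGraph (fun t => Fin (m t)))).mulVec v x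
      = (∑ y, v y) - ∑ a, v ⟨x.1, a⟩ := by
  have h1 : ∀ y, adjMat (SimpleGraph.completeMultipartiteGraph (fun t => Fin (m t))) x y * v y
      = v y - if x.1 = y.1 then v y else 0 := by
    intro y
    simp only [adjMat, SimpleGraph.adjMatrix_apply, SimpleGraph.completeMultipartiteGraph,
      SimpleGraph.comap_adj, SimpleGraph.top_adj]
    by_cases h : x.1 = y.1 <;> simp [h]
  simp only [Matrix.mulVec, dotProduct]
  rw [Finset.sum_congr rfl (fun y _ => h1 y), Finset.sum_sub_distrib]
  congr 1
  rw [Fintype.sum_sigma]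
  rw [Finset.sum_eq_single x.1]
  · simp
  · intro b _ hb
    simp [hb.symm]
  · simp

lemma mem_spec_iff {V : Type*} [Fintype V] [DecidableEq V] (A : Matrix V V ℝ) (μ : ℝ) :
    μ ∈ spectrum ℝ A ↔ ∃ v, v ≠ 0 ∧ A.mulVec v = μ • v := by
  rw [← Matrix.spectrum_toLin', ← Module.End.hasEigenvalue_iff_mem_spectrum]
  constructor
  · intro h
    obtain ⟨v, hv⟩ := h.exists_hasEigenvector
    refine ⟨v, hv.2, ?_⟩
    simpa using hv.apply_eq_smul
  · rintro ⟨v, h0, hv⟩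
    refine Module.End.hasEigenvalue_of_hasEigenvector (x := v) ⟨?_, h0⟩
    rw [Module.End.mem_eigenspace_iff]
    simpa using hv

lemma spec_cmg_iff {k : ℕ} (m : Fin k → ℕ) (hk : 0 < k) (hm : ∀ t, 1 ≤ m t) (μ : ℝ) (hμ : 0 < μ) :
    μ ∈ spectrum ℝ (adjMat (SimpleGraph.completeMultipartiteGraph (fun t => Fin (m t))))
      ↔ ∑ t, (m t : ℝ) / (μ + m t) = 1 := by
  have hpos : ∀ t, 0 < μ + (m t : ℝ) := fun t => by positivity
  rw [mem_spec_iff]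
  constructor
  · rintro ⟨v, h0, hv⟩
    have e : ∀ x : Σ t, Fin (m t), (∑ y, v y) - ∑ a, v ⟨x.1, a⟩ = μ * v x := by
      intro x
      rw [← adjMat_mulVec_cmg, hv]; rfl
    set S := ∑ y, v y with hS
    have hT : ∀ t, ∑ a, v ⟨t, a⟩ = S * ((m t : ℝ) / (μ + m t)) := by
      intro t
      have e' : ∀ a : Fin (m t), S - ∑ b, v ⟨t, b⟩ = μ * v ⟨t, a⟩ := fun a => e ⟨t, a⟩
      generalize hQ : ∑ b, v ⟨t, b⟩ = Q at e' ⊢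
      have h5 : ∑ a : Fin (m t), (S - Q) = ∑ a : Fin (m t), μ * v ⟨t, a⟩ :=
        Finset.sum_congr rfl (fun a _ => e' a)
      rw [← Finset.mul_sum, hQ, Finset.sum_const, Finset.card_univ, Fintype.card_fin,
        nsmul_eq_mul] at h5
      have := hpos t
      field_simp
      linarith
    have hSS : S = S * ∑ t, (m t : ℝ) / (μ + m t) := by
      rw [Finset.mul_sum, ← Finset.sum_congr rfl (fun t _ => hT t), hS, Fintype.sum_sigma]
    by_cases hS0 : S = 0
    · exfalso
      apply h0
      funext x
      have := e x
      rw [hT, hS0] at this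
      simp at this
      rcases this with h | h
      · exact absurd h hμ.ne'
      · simpa using h
    · have : S * (∑ t, (m t : ℝ) / (μ + m t)) = S * 1 := by linarith
      exact mul_left_cancel₀ hS0 this
  · intro h
    refine ⟨fun x => 1 / (μ + m x.1), ?_, ?_⟩
    · intro h0
      have := congrFun h0 ⟨⟨0, hk⟩, ⟨0, hm _⟩⟩
      have h3 := hpos ⟨0, hk⟩
      simp only [Pi.zero_apply] at this
      have h4 := one_div_pos.mpr h3
      linarith
    · funext x
      rw [adjMat_mulVec_cmg, Fintype.sum_sigma]
      have : ∀ t, ∑ a : Fin (m t), 1 / (μ + (m t : ℝ)) = (m t : ℝ) / (μ + m t) := by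
        intro t; simp [div_eq_mul_inv]
      simp only [this, h, Pi.smul_apply, smul_eq_mul]
      have := hpos x.1
      field_simp
      ring

lemma f_anti {k : ℕ} (m : Fin k → ℕ) (hk : 0 < k) (hm : ∀ t, 1 ≤ m t) (a b : ℝ) (ha : 0 < a)
    (hab : a < b) : ∑ t, (m t : ℝ) / (b + m t) < ∑ t, (m t : ℝ) / (a + m t) := by
  apply Finset.sum_lt_sum_of_nonempty ⟨⟨0, hk⟩, Finset.mem_univ _⟩
  intro t _
  have : (0 : ℝ) < m t := by exact_mod_cast hm t
  apply div_lt_div_of_pos_left this <;> linarith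

lemma specRad_cmg {k : ℕ} (m : Fin k → ℕ) (hk : 2 ≤ k) (hm : ∀ t, 1 ≤ m t) :
    0 < specRad (SimpleGraph.completeMultipartiteGraph (fun t => Fin (m t))) ∧
    ∑ t, (m t : ℝ) / (specRad (SimpleGraph.completeMultipartiteGraph (fun t => Fin (m t))) + m t)
      = 1 := by
  have hmr : ∀ t, (0 : ℝ) < m t := fun t => by exact_mod_cast hm t
  have hne : (Finset.univ : Finset (Fin k)).Nonempty := ⟨⟨0, by omega⟩, Finset.mem_univ _⟩
  set N : ℝ := ∑ t, (m t : ℝ) with hN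
  have hNpos : 0 < N := Finset.sum_pos (fun t _ => hmr t) hne
  set f : ℝ → ℝ := fun z => ∑ t, (m t : ℝ) / (z + m t) with hf
  have hc : ContinuousOn f (Set.Icc 0 N) := by
    apply continuousOn_finsetSum
    intro t _
    apply ContinuousOn.div continuousOn_const (by fun_prop)
    intro z hz
    have := hmr t
    have := hz.1
    positivity
  have f0 : f 0 = k := by
    simp only [hf, zero_add]
    rw [Finset.sum_congr rfl (fun t _ => div_self (hmr t).ne')]
    simp
  have fN : f N < 1 := by
    have : f N < ∑ t, (m t : ℝ) / N := by
      apply Finset.sum_lt_sum_of_nonempty hne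
      intro t _
      have := hmr t
      apply div_lt_div_of_pos_left this hNpos; linarith
    rwa [← Finset.sum_div, ← hN, div_self hNpos.ne'] at this
  have hk' : (2 : ℝ) ≤ k := by exact_mod_cast hk
  obtain ⟨μ, hμ, hμ1⟩ := intermediate_value_Icc' hNpos.le hc
    (show (1 : ℝ) ∈ Set.Icc (f N) (f 0) from ⟨fN.le, by linarith⟩)
  have hμ0 : 0 < μ := by
    rcases hμ.1.lt_or_eq with h | h
    · exact h
    · rw [← h, f0] at hμ1
      linarith
  have hg : IsGreatest (spectrum ℝ
      (adjMat (SimpleGraph.completeMultipartiteGraph (fun t => Fin (m t))))) μ := by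
    refine ⟨(spec_cmg_iff m (by omega) hm μ hμ0).2 hμ1, ?_⟩
    intro ν hν
    by_contra hlt
    push Not at hlt
    have h1 := (spec_cmg_iff m (by omega) hm ν (hμ0.trans hlt)).1 hν
    have h3 := f_anti m (by omega) hm μ ν hμ0 hlt
    simp only [hf] at hμ1
    linarith
  have : specRad (SimpleGraph.completeMultipartiteGraph (fun t => Fin (m t))) = μ := hg.csSup_eq
  rw [this]
  exact ⟨hμ0, hμ1⟩

lemma two_term (a b μ : ℝ) (hμ : 0 < μ) (hb : 0 < b) (h : b + 2 ≤ a) :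
    a / (μ + a) + b / (μ + b) < (a - 1) / (μ + (a - 1)) + (b + 1) / (μ + (b + 1)) := by
  have h1 : ∀ c : ℝ, 0 < c → c / (μ + c) = 1 - μ / (μ + c) := by
    intro c hc
    have : μ + c ≠ 0 := by positivity
    field_simp
    ring
  rw [h1 a (by linarith), h1 b hb, h1 (a - 1) (by linarith), h1 (b + 1) (by linarith)]
  have p1 : 0 < μ + a := by linarith
  have p2 : 0 < μ + b := by linarith
  have p3 : 0 < μ + (a - 1) := by linarith
  have p4 : 0 < μ + (b + 1) := by linarith
  have e1 : μ / (μ + (a - 1)) - μ / (μ + a) = μ / ((μ + (a - 1)) * (μ + a)) := by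
    field_simp; ring
  have e2 : μ / (μ + b) - μ / (μ + (b + 1)) = μ / ((μ + b) * (μ + (b + 1))) := by
    field_simp; ring
  have : μ / ((μ + (a - 1)) * (μ + a)) < μ / ((μ + b) * (μ + (b + 1))) := by
    apply div_lt_div_of_pos_left hμ (by positivity)
    nlinarith
  linarith

/-- Balancing a complete multipartite graph strictly increases the spectral radius:
if `n i ≥ n j + 2`, moving one vertex from part `i` to part `j` increases `λ`. -/
theorem specRad_balance_lt (k : ℕ) (n : Fin k → ℕ) (hn : ∀ i, 1 ≤ n i)
    (i j : Fin k) (hij : i ≠ j) (h2 : n j + 2 ≤ n i) :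
    specRad (SimpleGraph.completeMultipartiteGraph (fun t => Fin (n t))) <
      specRad (SimpleGraph.completeMultipartiteGraph
        (fun t => Fin ((Function.update (Function.update n i (n i - 1)) j (n j + 1)) t))) := by
  set n' : Fin k → ℕ := Function.update (Function.update n i (n i - 1)) j (n j + 1) with hn'
  have hk : 2 ≤ k := by
    have := i.2
    have := j.2
    have : (i : ℕ) ≠ j := fun h => hij (Fin.ext h)
    omega
  have ni : n' i = n i - 1 := by simp [hn', hij]
  have nj : n' j = n j + 1 := by simp [hn']
  have no : ∀ t, t ≠ i → t ≠ j → n' t = n t := by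
    intro t h h'
    simp [hn', h, h']
  have hm' : ∀ t, 1 ≤ n' t := by
    intro t
    by_cases h : t = i
    · rw [h, ni]; omega
    by_cases h' : t = j
    · rw [h', nj]; omega
    rw [no t h h']; exact hn t
  obtain ⟨p1, q1⟩ := specRad_cmg n hk hn
  obtain ⟨p2, q2⟩ := specRad_cmg n' hk hm'
  set μ := specRad (SimpleGraph.completeMultipartiteGraph (fun t => Fin (n t)))
  set ν := specRad (SimpleGraph.completeMultipartiteGraph (fun t => Fin (n' t)))
  have key : ∑ t, (n t : ℝ) / (μ + n t) < ∑ t, (n' t : ℝ) / (μ + n' t) := by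
    have hji : j ∈ Finset.univ.erase i := by simp [hij.symm]
    rw [← Finset.add_sum_erase _ _ (Finset.mem_univ i), ← Finset.add_sum_erase _ _ hji,
      ← Finset.add_sum_erase _ (fun t => (n' t : ℝ) / (μ + n' t)) (Finset.mem_univ i),
      ← Finset.add_sum_erase _ (fun t => (n' t : ℝ) / (μ + n' t)) hji]
    have hrest : ∑ t ∈ (Finset.univ.erase i).erase j, (n' t : ℝ) / (μ + n' t)
        = ∑ t ∈ (Finset.univ.erase i).erase j, (n t : ℝ) / (μ + n t) := by
      apply Finset.sum_congr rfl
      intro t ht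
      simp only [Finset.mem_erase] at ht
      rw [no t ht.2.1 ht.1]
    rw [hrest]
    have hb : (0 : ℝ) < n j := by exact_mod_cast hn j
    have := two_term (n i) (n j) μ p1 hb (by exact_mod_cast h2)
    simp only [ni, nj]
    rw [Nat.cast_sub (by omega)]
    push_cast
    linarith
  by_contra hle
  push Not at hle
  rcases hle.lt_or_eq with h | h
  · have := f_anti n' (by omega) hm' ν μ p2 h
    linarith
  · rw [h] at q2
    linarith
end

section
/- For every n-vertex K_{k+1}-free graph G, the spectral radius satisfies λ(G) ≤ λ(T_k(n)), with equality if and only if G is isomorphic to the Turán graph T_k(n). -/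
open Finset

open Finset SimpleGraph

namespace NikTuran

open Classical in
lemma adjMat_apply {V : Type*} [Fintype V] [DecidableEq V] (G : SimpleGraph V) (u v : V) :
    adjMat G u v = if G.Adj u v then 1 else 0 := by
  simp [adjMat, SimpleGraph.adjMatrix_apply]

open Classical in
/-- The sum of the weights of the neighbours of `v`. -/
noncomputable def nb {V : Type*} [Fintype V] (G : SimpleGraph V) (x : V → ℝ) (v : V) : ℝ :=
  ∑ w, if G.Adj v w then x w else 0

lemma nb_univ {V : Type*} [Fintype V] (x : V → ℝ) (G : SimpleGraph V) (v : V) :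
    nb G x v = ∑ w, (open Classical in if G.Adj v w then (1:ℝ) else 0) * x w := by
  simp [nb]

section

variable {V : Type*} [Fintype V] [DecidableEq V]

lemma adjMat_mulVec (G : SimpleGraph V) (x : V → ℝ) : Matrix.mulVec (adjMat G) x = nb G x := by
  ext v
  simp [Matrix.mulVec, dotProduct, adjMat_apply, nb]

lemma adjMat_herm (G : SimpleGraph V) : (adjMat G).IsHermitian := by
  ext u v
  simp only [Matrix.conjTranspose_apply, adjMat_apply, star_trivial]
  classical
  exact if_congr (G.adj_comm v u) rfl rfl

lemma spec_finite (G : SimpleGraph V) : (spectrum ℝ (adjMat G)).Finite := by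
  rw [(adjMat_herm G).spectrum_real_eq_range_eigenvalues]
  exact Set.finite_range _

lemma psd (G : SimpleGraph V) :
    (algebraMap ℝ (Matrix V V ℝ) (specRad G) - adjMat G).PosSemidef := by
  rw [Matrix.posSemidef_iff_isHermitian_and_spectrum_nonneg]
  constructor
  · apply Matrix.IsHermitian.sub _ (adjMat_herm G)
    rw [Matrix.algebraMap_eq_diagonal]
    exact Matrix.isHermitian_diagonal _
  · rw [← spectrum.singleton_sub_eq]
    rintro _ ⟨a, ha, b, hb, rfl⟩
    have : b ≤ specRad G := le_csSup (spec_finite G).bddAbove hb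
    simp only [Set.mem_singleton_iff] at ha
    subst ha
    simpa using this

lemma psd_mulVec (G : SimpleGraph V) (x : V → ℝ) (v : V) :
    Matrix.mulVec (algebraMap ℝ (Matrix V V ℝ) (specRad G) - adjMat G) x v
      = specRad G * x v - nb G x v := by
  rw [Matrix.sub_mulVec, adjMat_mulVec, Matrix.algebraMap_eq_diagonal]
  simp [Matrix.mulVec_diagonal]

lemma psd_form (G : SimpleGraph V) (x : V → ℝ) :
    star x ⬝ᵥ (Matrix.mulVec (algebraMap ℝ (Matrix V V ℝ) (specRad G) - adjMat G) x)
      = specRad G * ∑ v, x v ^ 2 - ∑ v, x v * nb G x v := by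
  simp only [dotProduct, psd_mulVec, mul_sum, ← sum_sub_distrib]
  apply sum_congr rfl
  intro v _
  simp
  ring

lemma rayleigh (G : SimpleGraph V) (x : V → ℝ) :
    ∑ v, x v * nb G x v ≤ specRad G * ∑ v, x v ^ 2 := by
  have := (psd G).dotProduct_mulVec_nonneg x
  rw [psd_form] at this
  linarith

lemma rayleigh_eq (G : SimpleGraph V) (x : V → ℝ)
    (h : specRad G * ∑ v, x v ^ 2 ≤ ∑ v, x v * nb G x v) (v : V) :
    nb G x v = specRad G * x v := by
  have h1 := (Matrix.PosSemidef.dotProduct_mulVec_zero_iff (psd G) x).1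
    (by rw [psd_form]; linarith [rayleigh G x])
  have h2 := congrFun h1 v
  rw [psd_mulVec] at h2
  simp at h2
  linarith

lemma exists_perron [Nonempty V] (G : SimpleGraph V) :
    ∃ x : V → ℝ, (∀ v, 0 ≤ x v) ∧ (∃ v, 0 < x v) ∧ ∀ v, nb G x v = specRad G * x v := by
  have hmem : specRad G ∈ spectrum ℝ (adjMat G) := by
    apply Set.Nonempty.csSup_mem _ (spec_finite G)
    rw [(adjMat_herm G).spectrum_real_eq_range_eigenvalues]
    exact Set.range_nonempty _
  rw [← Matrix.spectrum_toLin', ← Module.End.hasEigenvalue_iff_mem_spectrum] at hmem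
  obtain ⟨y, hy⟩ := hmem.exists_hasEigenvector
  have hy1 : ∀ v, nb G y v = specRad G * y v := by
    intro v
    have := congrFun hy.apply_eq_smul v
    rw [Matrix.toLin'_apply, adjMat_mulVec] at this
    simpa using this
  obtain ⟨v, hv⟩ := Function.ne_iff.1 hy.2
  refine ⟨fun v => |y v|, fun v => abs_nonneg _, ⟨v, abs_pos.2 hv⟩, ?_⟩
  apply rayleigh_eq
  have e1 : specRad G * ∑ v, |y v| ^ 2 = ∑ v, y v * nb G y v := by
    simp only [sq_abs, mul_sum, hy1]
    exact sum_congr rfl fun v _ => by ring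
  rw [e1]
  apply sum_le_sum
  intro v _
  simp only [nb, mul_sum]
  apply sum_le_sum
  intro w _
  split_ifs
  · rw [← abs_mul]; exact le_abs_self _
  · simp

open Classical in
lemma form_diff (G H : SimpleGraph V) (t : V) (x : V → ℝ)
    (hGH : ∀ u v, u ≠ t → v ≠ t → (G.Adj u v ↔ H.Adj u v)) :
    ∑ v, x v * nb H x v - ∑ v, x v * nb G x v = 2 * (x t * (nb H x t - nb G x t)) := by
  let D : V → V → ℝ := fun u v => (if H.Adj u v then 1 else 0) - (if G.Adj u v then 1 else 0)
  have hD : ∀ v, nb H x v - nb G x v = ∑ w, D v w * x w := by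
    intro v
    rw [nb_univ, nb_univ, ← sum_sub_distrib]
    exact sum_congr rfl fun w _ => by simp [D, sub_mul]
  have hs : ∀ u v, D u v = D v u := by intro u v; simp [D, G.adj_comm, H.adj_comm]
  have hz : ∀ u v, u ≠ t → v ≠ t → D u v = 0 := by
    intro u v hu hv; simp [D, hGH u v hu hv]
  have hr : ∀ u, u ≠ t → nb H x u - nb G x u = D u t * x t := by
    intro u hu
    rw [hD, sum_eq_single t]
    · intro b _ hb; rw [hz u b hu hb, zero_mul]
    · simp
  have htt : D t t = 0 := by simp [D]
  rw [← sum_sub_distrib]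
  simp only [← mul_sub]
  rw [← add_sum_erase _ _ (mem_univ t)]
  have : ∑ u ∈ univ.erase t, x u * (nb H x u - nb G x u) = x t * (nb H x t - nb G x t) := by
    rw [hD t, ← add_sum_erase _ _ (mem_univ t), htt, zero_mul, zero_add, mul_sum]
    apply sum_congr rfl
    intro u hu
    rw [hr u (ne_of_mem_erase hu), hs]
    ring
  rw [this]; ring

lemma specRad_iso {W : Type*} [Fintype W] [DecidableEq W] {G : SimpleGraph V} {H : SimpleGraph W}
    (e : G ≃g H) : specRad G = specRad H := by
  have : adjMat H = Matrix.reindexAlgEquiv ℝ ℝ e.toEquiv (adjMat G) := by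
    ext u v
    simp only [Matrix.coe_reindexAlgEquiv, Matrix.reindex_apply, Matrix.submatrix_apply,
      adjMat_apply]
    have : G.Adj (e.toEquiv.symm u) (e.toEquiv.symm v) ↔ H.Adj u v := by
      rw [← e.map_adj_iff]; exact iff_of_eq (congrArg₂ H.Adj (e.apply_symm_apply u) (e.apply_symm_apply v))
    classical
    exact (if_congr this rfl rfl).symm
  unfold specRad
  rw [this, AlgEquiv.spectrum_eq]

end
end NikTuran

namespace NikTuran

section

variable {V : Type*} [Fintype V] [DecidableEq V] {G : SimpleGraph V} {k : ℕ} {x : V → ℝ}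

/-- `G` maximises the spectral radius among `K_{k+1}`-free graphs on its vertex set. -/
def MaxSpec (G : SimpleGraph V) (k : ℕ) : Prop :=
  G.CliqueFree (k + 1) ∧ ∀ H : SimpleGraph V, H.CliqueFree (k + 1) → specRad H ≤ specRad G

lemma step (hG : MaxSpec G k) (hpos : ∃ v, 0 < x v) (hx : ∀ v, nb G x v = specRad G * x v)
    {H : SimpleGraph V} (hH : H.CliqueFree (k + 1)) (t : V)
    (hGH : ∀ u v, u ≠ t → v ≠ t → (G.Adj u v ↔ H.Adj u v)) :
    x t * (nb H x t - nb G x t) ≤ 0 ∧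
      (x t * (nb H x t - nb G x t) = 0 → ∀ v, nb H x v = specRad G * x v) := by
  have hd := form_diff G H t x hGH
  have hr := rayleigh H x
  have hle := hG.2 H hH
  have hS : 0 < ∑ v, x v ^ 2 := by
    obtain ⟨v, hv⟩ := hpos
    exact sum_pos' (fun _ _ => sq_nonneg _) ⟨v, mem_univ v, by positivity⟩
  have he : ∑ v, x v * nb G x v = specRad G * ∑ v, x v ^ 2 := by
    simp only [mul_sum, hx]
    exact sum_congr rfl fun v _ => by ring
  have hm := mul_le_mul_of_nonneg_right hle hS.le
  refine ⟨by linarith, fun h0 v => ?_⟩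
  have h1 := rayleigh_eq H x (by linarith) v
  have h2 : specRad G ≤ specRad H := by
    by_contra hlt
    have := mul_lt_mul_of_pos_right (not_le.1 hlt) hS
    linarith
  rw [h1, le_antisymm hle h2]

lemma nb_congr (G H : SimpleGraph V) (x : V → ℝ) (u u' t : V) [Decidable (H.Adj u t)]
    [Decidable (G.Adj u' t)] (h : ∀ w, w ≠ t → (H.Adj u w ↔ G.Adj u' w)) :
    nb H x u = nb G x u' - (if G.Adj u' t then x t else 0) + (if H.Adj u t then x t else 0) := by
  classical
  have e : ∀ (K : SimpleGraph V) (v : V) [Decidable (K.Adj v t)], nb K x v =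
      (if K.Adj v t then x t else 0) + ∑ w ∈ univ.erase t, if K.Adj v w then x w else 0 := by
    intro K v _
    rw [nb, ← add_sum_erase _ _ (mem_univ t)]
    congr
  rw [e H u, e G u', sum_congr rfl fun w hw => if_congr (h w (ne_of_mem_erase hw)) rfl rfl]
  ring

open Classical in
lemma nb_replace_self (G : SimpleGraph V) (x : V → ℝ) (s t : V) :
    nb (G.replaceVertex s t) x t = nb G x s - (if G.Adj s t then x t else 0) := by
  rw [nb_congr G (G.replaceVertex s t) x t s t
    fun w hw => G.adj_replaceVertex_iff_of_ne_right s hw]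
  simp

open Classical in
lemma nb_replace_of_ne (G : SimpleGraph V) (x : V → ℝ) (s : V) {t u : V} (hu : u ≠ t) :
    nb (G.replaceVertex s t) x u =
      nb G x u - (if G.Adj u t then x t else 0) + (if G.Adj u s then x t else 0) := by
  rw [nb_congr G (G.replaceVertex s t) x u u t
    fun w hw => G.adj_replaceVertex_iff_of_ne s hu hw]
  congr 1
  refine if_congr ?_ rfl rfl
  rw [(G.replaceVertex s t).adj_comm, G.adj_replaceVertex_iff_of_ne_right s hu, G.adj_comm]

lemma step_replace (hG : MaxSpec G k) (hpos : ∃ v, 0 < x v)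
    (hx : ∀ v, nb G x v = specRad G * x v) (s t : V) :
    x t * (nb (G.replaceVertex s t) x t - nb G x t) ≤ 0 ∧
      (x t * (nb (G.replaceVertex s t) x t - nb G x t) = 0 →
        ∀ v, nb (G.replaceVertex s t) x v = specRad G * x v) :=
  step hG hpos hx (hG.1.replaceVertex s t) t
    fun _ _ hu hv => (G.adj_replaceVertex_iff_of_ne s hu hv).symm

lemma perron_pos (hG : MaxSpec G k) (hl : 0 < specRad G) (h0 : ∀ v, 0 ≤ x v)
    (hpos : ∃ v, 0 < x v) (hx : ∀ v, nb G x v = specRad G * x v) (t : V) : 0 < x t := by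
  refine lt_of_le_of_ne (h0 t) fun ht => ?_
  obtain ⟨s, hs⟩ := hpos
  have h1 := (step_replace hG ⟨s, hs⟩ hx s t).2 (by simp [← ht]) t
  rw [nb_replace_self, ← ht, hx s] at h1
  simp at h1
  rcases h1 with h | h <;> linarith

/-- Bundled data: a spectrally maximal graph together with a positive Perron vector. -/
structure Good (G : SimpleGraph V) (k : ℕ) (x : V → ℝ) : Prop where
  hmax : MaxSpec G k
  lpos : 0 < specRad G
  pos : ∀ v, 0 < x v
  eig : ∀ v, nb G x v = specRad G * x v

namespace Good

lemma nonadj_le (h : Good G k x) {s t : V} (hst : ¬ G.Adj s t) : x s ≤ x t := by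
  have h1 := (step_replace h.hmax ⟨t, h.pos t⟩ h.eig s t).1
  rw [nb_replace_self, h.eig, h.eig, if_neg hst, sub_zero] at h1
  have h2 := h.pos t
  have h3 := h.lpos
  by_contra hlt
  have : 0 < x t * (specRad G * x s - specRad G * x t) := by
    apply mul_pos h2
    rw [← mul_sub]
    exact mul_pos h3 (by linarith)
  linarith

lemma nonadj_eq (h : Good G k x) {s t : V} (hst : ¬ G.Adj s t) : x s = x t :=
  le_antisymm (h.nonadj_le hst) (h.nonadj_le fun a => hst a.symm)

lemma trans (h : Good G k x) {t s u : V} (hts : ¬ G.Adj t s) (hsu : ¬ G.Adj s u) :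
    ¬ G.Adj t u := by
  intro htu
  have hst : ¬ G.Adj s t := fun a => hts a.symm
  have h1 := (step_replace h.hmax ⟨t, h.pos t⟩ h.eig s t).2 (by
    rw [nb_replace_self, h.eig, h.eig, if_neg hst, h.nonadj_eq hst]; ring) u
  rw [nb_replace_of_ne _ _ _ htu.ne', h.eig, if_pos htu.symm,
    if_neg (fun a => hsu a.symm)] at h1
  linarith [h.pos t]

lemma equivalence (h : Good G k x) : Equivalence (¬ G.Adj · ·) where
  refl := by simp
  symm := by simp [SimpleGraph.adj_comm]
  trans := h.trans

/-- The non-adjacency classes. -/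
noncomputable def fp (h : Good G k x) : Finpartition (univ : Finset V) :=
  letI : DecidableRel (Setoid.mk _ h.equivalence).r := Classical.decRel _
  Finpartition.ofSetoid (Setoid.mk _ h.equivalence)

lemma mem_part (h : Good G k x) {s t : V} : t ∈ h.fp.part s ↔ ¬ G.Adj s t := by
  let : DecidableRel (Setoid.mk _ h.equivalence).r := Classical.decRel _
  exact Finpartition.mem_part_ofSetoid_iff_rel

lemma part_eq (h : Good G k x) {s t : V} : h.fp.part s = h.fp.part t ↔ ¬ G.Adj s t := by
  rw [← h.mem_part, h.fp.mem_part_iff_part_eq_part (mem_univ t) (mem_univ s), eq_comm]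

open Classical in
lemma sum_part (h : Good G k x) (v : V) : ∑ w ∈ h.fp.part v, x w = #(h.fp.part v) * x v := by
  rw [sum_congr rfl fun w hw => (h.nonadj_eq (h.mem_part.1 hw)).symm]
  simp

open Classical in
lemma nb_eq (h : Good G k x) (v : V) : nb G x v = ∑ w, x w - #(h.fp.part v) * x v := by
  have h1 : h.fp.part v = univ.filter fun w => ¬ G.Adj v w := by
    ext w; simp [h.mem_part]
  rw [← h.sum_part, h1, eq_sub_iff_add_eq, nb, ← sum_filter, sum_filter_add_sum_filter_not]

theorem isEquipartition (h : Good G k x) : h.fp.IsEquipartition := by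
  by_contra hn
  rw [Finpartition.not_isEquipartition] at hn
  obtain ⟨large, hl, small, hs, ineq⟩ := hn
  obtain ⟨w, hw⟩ := h.fp.nonempty_of_mem_parts hl
  obtain ⟨v, hv⟩ := h.fp.nonempty_of_mem_parts hs
  have large_eq := h.fp.part_eq_of_mem hl hw
  have small_eq := h.fp.part_eq_of_mem hs hv
  have hne : small ≠ large := by rintro rfl; omega
  have ha : G.Adj v w := by
    by_contra hn
    rw [← h.part_eq, small_eq, large_eq] at hn
    exact hne hn
  have h1 := (step_replace h.hmax ⟨v, h.pos v⟩ h.eig v w).1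
  rw [nb_replace_self, if_pos ha, h.eig, h.eig] at h1
  have hwp := h.pos w
  have hvp := h.pos v
  have h2 : specRad G * x v ≤ (specRad G + 1) * x w := by
    by_contra hlt
    have : 0 < x w * (specRad G * x v - x w - specRad G * x w) := mul_pos hwp (by linarith)
    linarith
  have ev := h.nb_eq v
  have ew := h.nb_eq w
  rw [h.eig, small_eq] at ev
  rw [h.eig, large_eq] at ew
  have hdisj : Disjoint small large := h.fp.disjoint hs hl hne
  have hsum : #small * x v + #large * x w ≤ ∑ u, x u := by
    have e1 := h.sum_part v
    have e2 := h.sum_part w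
    rw [small_eq] at e1
    rw [large_eq] at e2
    rw [← e1, ← e2, ← sum_union hdisj]
    exact sum_le_sum_of_subset_of_nonneg (subset_univ _) fun u _ _ => (h.pos u).le
  have hab : (#small : ℝ) + 2 ≤ #large := by exact_mod_cast ineq
  have hb0 : (0 : ℝ) ≤ #small := Nat.cast_nonneg _
  generalize (#small : ℝ) = b at *
  generalize (#large : ℝ) = a at *
  have lpos := h.lpos
  generalize specRad G = l at *
  generalize (∑ u, x u) = S at *
  have hal : a ≤ l + 1 := by
    have : a * x w ≤ (l + 1) * x w := by linarith
    exact le_of_mul_le_mul_right this hwp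
  have e3 : (l + b) * x v = (l + a) * x w := by linarith
  have hb : 0 ≤ l + b := by linarith
  have h6 : l * (l + a) * x w ≤ (l + b) * (l + 1) * x w := by
    calc l * (l + a) * x w = (l + b) * (l * x v) := by linear_combination (-l) * e3
      _ ≤ (l + b) * ((l + 1) * x w) := mul_le_mul_of_nonneg_left h2 hb
      _ = _ := by ring
  have h7 := le_of_mul_le_mul_right h6 hwp
  nlinarith

lemma card_parts_le (h : Good G k x) : #h.fp.parts ≤ k := by
  by_contra! l
  obtain ⟨z, -, hz⟩ := h.fp.exists_subset_part_bijOn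
  have ncf : ¬G.CliqueFree #z := by
    refine IsNClique.not_cliqueFree ⟨fun v hv w hw hn ↦ ?_, rfl⟩
    contrapose hn
    exact hz.injOn hv hw (by rwa [h.part_eq])
  rw [Finset.card_eq_of_equiv hz.equiv] at ncf
  exact absurd (h.hmax.1.mono (Nat.succ_le_of_lt l)) ncf

open Classical in
theorem card_parts (h : Good G k x) : #h.fp.parts = min (Fintype.card V) k := by
  apply le_antisymm (le_min h.fp.card_parts_le_card h.card_parts_le)
  by_contra! l
  rw [lt_min_iff] at l
  obtain ⟨a, -, b, -, hn, he⟩ :=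
    exists_ne_map_eq_of_card_lt_of_maps_to l.1 fun a _ ↦ h.fp.part_mem.2 (mem_univ a)
  have cf : G.CliqueFree k := by
    rintro z ⟨zc, zk⟩
    obtain ⟨p, hp, q, hq, hpq, e⟩ :=
      exists_ne_map_eq_of_card_lt_of_maps_to (lt_of_lt_of_eq l.2 zk.symm) fun a _ ↦
        h.fp.part_mem.2 (mem_univ a)
    exact h.part_eq.1 e (zc hp hq hpq)
  have hab : ¬ G.Adj a b := h.part_eq.1 he
  have h1 := (step h.hmax ⟨a, h.pos a⟩ h.eig (cf.sup_edge a b) a (by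
    intro u v hu hv
    simp [edge_adj, hu, hv])).1
  have h2 : nb (G ⊔ edge a b) x a = nb G x a + x b := by
    have h3 : (G ⊔ edge a b).Adj a b := by simp [edge_adj, hn]
    rw [nb_congr G (G ⊔ edge a b) x a a b fun w hw => by simp [edge_adj, hw, hn],
      if_pos h3, if_neg hab, sub_zero]
  rw [h2] at h1
  have := mul_pos (h.pos a) (h.pos b)
  nlinarith

end Good

end

theorem Good.nonempty_iso {n k : ℕ} {G : SimpleGraph (Fin n)} {x : Fin n → ℝ} (h : Good G k x) :
    Nonempty (G ≃g turanGraph n k) := by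
  obtain ⟨zm, zp⟩ := h.isEquipartition.exists_partPreservingEquiv
  let f : Fin n ≃ Fin n := ((Equiv.subtypeUnivEquiv mem_univ).symm.trans zm).trans
    (finCongr (card_fin n))
  have hf : ∀ a, (f a : ℕ) = zm ⟨a, mem_univ a⟩ := fun a => rfl
  refine ⟨f, ?_⟩
  intro a b
  have := zp ⟨a, mem_univ a⟩ ⟨b, mem_univ b⟩
  rw [h.part_eq, h.card_parts, Fintype.card_fin, ← hf, ← hf] at this
  rw [turanGraph_adj, ← not_iff_not, not_ne_iff, this]
  rcases le_or_gt k n with c | c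
  · rw [min_eq_right c]
  · rw [min_eq_left c.le, Nat.mod_eq_of_lt (f a).2, Nat.mod_eq_of_lt (f b).2,
      Nat.mod_eq_of_lt ((f a).2.trans c), Nat.mod_eq_of_lt ((f b).2.trans c)]

open Classical in
theorem MaxSpec.nonempty_iso {n k : ℕ} (hk : 1 ≤ k) {G : SimpleGraph (Fin n)} (h : MaxSpec G k) :
    Nonempty (G ≃g turanGraph n k) := by
  rcases Nat.lt_or_ge n 2 with hn | hn
  · have : Subsingleton (Fin n) := Fin.subsingleton_iff_le_one.2 (by omega)
    have : G = turanGraph n k := Subsingleton.elim _ _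
    rw [this]
    exact ⟨Iso.refl⟩
  rcases Nat.lt_or_ge k 2 with hk2 | hk2
  · obtain rfl : k = 1 := by omega
    have h1 : G = ⊥ := by
      exact cliqueFree_two.1 h.1
    have h2 : turanGraph n 1 = ⊥ := cliqueFree_two.1 (turanGraph_cliqueFree (by omega))
    rw [h1, h2]
    exact ⟨Iso.refl⟩
  have : Nonempty (Fin n) := ⟨⟨0, by omega⟩⟩
  obtain ⟨x, x0, xp, xe⟩ := exists_perron G
  let a : Fin n := ⟨0, by omega⟩
  let b : Fin n := ⟨1, by omega⟩
  have hab : a ≠ b := by simp [a, b]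
  have lpos : 0 < specRad G := by
    have hcf : (⊥ ⊔ edge a b).CliqueFree (k + 1) :=
      ((cliqueFree_bot (le_refl 2)).sup_edge a b).mono (by omega)
    refine lt_of_lt_of_le ?_ (h.2 _ hcf)
    have hr := rayleigh (⊥ ⊔ edge a b) (fun _ => 1)
    have hs : 0 < ∑ v, (fun _ : Fin n => (1:ℝ)) v * nb (⊥ ⊔ edge a b) (fun _ => 1) v := by
      have hnn : ∀ v, 0 ≤ nb (⊥ ⊔ edge a b) (fun _ => 1) v := fun v =>
        sum_nonneg fun w _ => by split_ifs <;> norm_num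
      refine sum_pos' (fun v _ => by simpa using hnn v) ⟨a, mem_univ a, ?_⟩
      rw [one_mul]
      refine sum_pos' (fun w _ => by split_ifs <;> norm_num) ⟨b, mem_univ b, ?_⟩
      have : (⊥ ⊔ edge a b).Adj a b := by simp [edge_adj, hab]
      rw [if_pos this]; norm_num
    have h3 := lt_of_lt_of_le hs hr
    exact pos_of_mul_pos_left h3 (sum_nonneg fun _ _ => sq_nonneg _)
  exact Good.nonempty_iso ⟨h, lpos, perron_pos h lpos x0 xp xe, xe⟩

end NikTuran

theorem nikiforov_spectral_turan {n k : ℕ} (hk : 1 ≤ k) (G : SimpleGraph (Fin n))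
    (hG : G.CliqueFree (k + 1)) :
    specRad G ≤ specRad (SimpleGraph.turanGraph n k) ∧
      (specRad G = specRad (SimpleGraph.turanGraph n k) ↔
        Nonempty (G ≃g SimpleGraph.turanGraph n k)) := by
  obtain ⟨M, hM, hmax⟩ := Set.exists_max_image {H : SimpleGraph (Fin n) | H.CliqueFree (k + 1)}
    specRad (Set.toFinite _) ⟨G, hG⟩
  obtain ⟨e⟩ := NikTuran.MaxSpec.nonempty_iso hk (G := M) ⟨hM, hmax⟩
  have he := NikTuran.specRad_iso e
  refine ⟨he ▸ hmax G hG, fun h => ?_, fun ⟨f⟩ => NikTuran.specRad_iso f⟩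
  exact NikTuran.MaxSpec.nonempty_iso hk ⟨hG, fun H hH => by rw [h, ← he]; exact hmax H hH⟩
end
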